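/- With χ̃ as above (χ̃(x) = ∫ 𝟙_{Ω̃_ε}(x - ⟨x⟩ε u) ρ(u) du, ρ smooth supported in B(0,ε) with ∫ρ=1), for every multi-index k there exists a constant C(ε, k) such that |D^k χ̃(x)| ≤ C(ε, k) ⟨x⟩^{-|k|} for all x ∈ ℝ³. -/

import Mathlib

open MeasureTheory

noncomputable section

abbrev E3 := EuclideanSpace ℝ (Fin 3)

/-- The Japanese bracket `⟨x⟩ = (1 + |x|²)^{1/2}`. -/
noncomputable def jap (x : E3) : ℝ := Real.sqrt (1 + ‖x‖ ^ 2)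

/-- The rescaled mollification of the indicator of a set `S`:
`χ̃(x) = ∫ 𝟙_S(x - ⟨x⟩ε u) ρ(u) du`. -/
noncomputable def wCutoff (S : Set E3) (ε : ℝ) (ρ : E3 → ℝ) (x : E3) : ℝ :=
  ∫ u : E3, Set.indicator S (fun _ => (1 : ℝ)) (x - (jap x * ε) • u) * ρ u

lemma kernel_bound {F : Type} [NormedAddCommGroup F] [NormedSpace ℝ F]
    (U : Set (E3 × E3)) (R : ℝ) (K : (E3 × E3) × E3 → F)
    (hK : ContinuousOn K (U ×ˢ Set.univ))
    (hsupp : ∀ p ∈ U, ∀ w, w ∉ Metric.closedBall (0 : E3) R → K (p, w) = 0)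
    (T : Set (E3 × E3)) (hT : IsCompact T) (hTU : T ⊆ U) :
    ∃ C : ℝ, 0 ≤ C ∧ ∀ p ∈ T, ∀ w,
      ‖K (p, w)‖ ≤ Set.indicator (Metric.closedBall (0 : E3) R) (fun _ => C) w := by
  have hc : IsCompact (T ×ˢ Metric.closedBall (0 : E3) R) :=
    hT.prod (isCompact_closedBall _ _)
  obtain ⟨C, hC⟩ := hc.exists_bound_of_continuousOn
    (hK.mono (Set.prod_mono hTU (Set.subset_univ _)))
  refine ⟨max C 0, le_max_right _ _, fun p hp w => ?_⟩
  by_cases hw : w ∈ Metric.closedBall (0 : E3) R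
  · rw [Set.indicator_of_mem hw]
    exact (hC (p, w) ⟨hp, hw⟩).trans (le_max_left _ _)
  · rw [Set.indicator_of_notMem hw, hsupp p (hTU hp) w hw, norm_zero]

lemma integrable_ind (R C : ℝ) :
    Integrable (Set.indicator (Metric.closedBall (0 : E3) R) (fun _ => C)) volume := by
  rw [integrable_indicator_iff measurableSet_closedBall]
  exact integrableOn_const (isCompact_closedBall _ _).measure_lt_top.ne

def iot : E3 →L[ℝ] (E3 × E3) × E3 :=
  (ContinuousLinearMap.inl ℝ (E3 × E3) E3).comp (ContinuousLinearMap.inr ℝ E3 E3)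

lemma key (k : ℕ) : ∀ {F : Type} [NormedAddCommGroup F] [NormedSpace ℝ F]
    (U : Set (E3 × E3)) (_ : IsOpen U) (R : ℝ) (K : (E3 × E3) × E3 → F)
    (_ : ContDiffOn ℝ ((⊤ : ℕ∞) : WithTop ℕ∞) K (U ×ˢ Set.univ))
    (_ : ∀ p ∈ U, ∀ w, w ∉ Metric.closedBall (0 : E3) R → K (p, w) = 0)
    (T : Set (E3 × E3)) (_ : IsCompact T) (_ : T ⊆ U),
    ∃ C : ℝ, ∀ f : E3 → ℝ, Measurable f → (∀ w, ‖f w‖ ≤ 1) → ∀ a z, (a, z) ∈ T →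
      ‖iteratedFDeriv ℝ k (fun z => ∫ w, f w • K ((a, z), w)) z‖ ≤ C := by
  induction k with
  | zero =>
    intro F _ _ U hU R K hK hsupp T hT hTU
    obtain ⟨C, hC0, hC⟩ := kernel_bound U R K hK.continuousOn hsupp T hT hTU
    refine ⟨∫ w, Set.indicator (Metric.closedBall (0 : E3) R) (fun _ => C) w, ?_⟩
    intro f hf hf1 a z haz
    rw [norm_iteratedFDeriv_zero]
    refine norm_integral_le_of_norm_le (integrable_ind R C) (Filter.Eventually.of_forall fun w => ?_)
    rw [norm_smul]
    calc ‖f w‖ * ‖K ((a, z), w)‖ ≤ 1 * ‖K ((a, z), w)‖ := by gcongr; exact hf1 w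
      _ ≤ _ := by rw [one_mul]; exact hC _ haz w
  | succ k ih =>
    intro F _ _ U hU R K hK hsupp T hT hTU
    have hV : IsOpen (U ×ˢ (Set.univ : Set E3)) := hU.prod isOpen_univ
    set K' : (E3 × E3) × E3 → (E3 →L[ℝ] F) := fun q => (fderiv ℝ K q).comp iot with hK'
    have hK's : ContDiffOn ℝ ((⊤ : ℕ∞) : WithTop ℕ∞) K' (U ×ˢ Set.univ) :=
      (hK.fderiv_of_isOpen hV (by simp)).clm_comp contDiffOn_const
    have hK'supp : ∀ p ∈ U, ∀ w, w ∉ Metric.closedBall (0 : E3) R → K' (p, w) = 0 := by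
      intro p hp w hw
      have h0 : K =ᶠ[nhds (p, w)] fun _ => (0 : F) := by
        have : U ×ˢ (Metric.closedBall (0 : E3) R)ᶜ ∈ nhds (p, w) :=
          (hU.prod Metric.isClosed_closedBall.isOpen_compl).mem_nhds ⟨hp, hw⟩
        filter_upwards [this] with q hq
        exact hsupp q.1 hq.1 q.2 hq.2
      simp [hK', h0.fderiv_eq]
    obtain ⟨C, hC⟩ := ih U hU R K' hK's hK'supp T hT hTU
    refine ⟨C, fun f hf hf1 a z haz => ?_⟩
    have hslice : Continuous fun z : E3 => (a, z) := by fun_prop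
    have hmeas : ∀ {G : Type} [NormedAddCommGroup G] [NormedSpace ℝ G]
        (L : (E3 × E3) × E3 → G), ContinuousOn L (U ×ˢ Set.univ) → ∀ y, (a, y) ∈ U →
        AEStronglyMeasurable (fun w => f w • L ((a, y), w)) (volume : Measure E3) := by
      intro G _ _ L hL y hy
      have hc : Continuous fun w => L ((a, y), w) :=
        hL.comp_continuous (by fun_prop) (fun w => ⟨hy, Set.mem_univ _⟩)
      exact hf.aestronglyMeasurable.smul hc.aestronglyMeasurable
    have hder : ∀ y, (a, y) ∈ U → HasFDerivAt (fun z => ∫ w, f w • K ((a, z), w))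
        (∫ w, f w • K' ((a, y), w)) y := by
      intro y hy
      have hUa : IsOpen {z | (a, z) ∈ U} := hU.preimage hslice
      obtain ⟨δ, hδ, hball⟩ := Metric.nhds_basis_closedBall.mem_iff.1 (hUa.mem_nhds hy)
      obtain ⟨C', hC'0, hC'⟩ := kernel_bound U R K' hK's.continuousOn hK'supp
        ((fun z => (a, z)) '' Metric.closedBall y δ)
        ((isCompact_closedBall _ _).image hslice)
        (by rintro _ ⟨z, hz, rfl⟩; exact hball hz)
      obtain ⟨C0, hC00, hC0⟩ := kernel_bound U R K hK.continuousOn hsupp {(a, y)}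
        isCompact_singleton (by simpa using hy)
      refine hasFDerivAt_integral_of_dominated_of_fderiv_le
        (F := fun z w => f w • K ((a, z), w)) (F' := fun z w => f w • K' ((a, z), w))
        (Metric.closedBall_mem_nhds y hδ) ?_ ?_ ?_ ?_ (integrable_ind R C') ?_
      · filter_upwards [hUa.mem_nhds hy] with z hz
        exact hmeas K hK.continuousOn z hz
      · refine (integrable_ind R C0).mono' (hmeas K hK.continuousOn y hy)
          (Filter.Eventually.of_forall fun w => ?_)
        rw [norm_smul]
        exact (mul_le_of_le_one_left (norm_nonneg _) (hf1 w)).trans (hC0 _ rfl w)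
      · exact hmeas K' hK's.continuousOn y hy
      · refine Filter.Eventually.of_forall fun w z hz => ?_
        rw [norm_smul]
        exact (mul_le_of_le_one_left (norm_nonneg _) (hf1 w)).trans
          (hC' _ (Set.mem_image_of_mem _ hz) w)
      · refine Filter.Eventually.of_forall fun w z hz => ?_
        have hzV : ((a, z), w) ∈ U ×ˢ (Set.univ : Set E3) := ⟨hball hz, Set.mem_univ _⟩
        have hd : HasFDerivAt K (fderiv ℝ K ((a, z), w)) ((a, z), w) :=
          ((hK.contDiffAt (hV.mem_nhds hzV)).differentiableAt (by simp)).hasFDerivAt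
        have hi : HasFDerivAt (fun z : E3 => ((a, z), w)) iot z := by
          have h1 : HasFDerivAt (fun z : E3 => (a, z)) (ContinuousLinearMap.inr ℝ E3 E3) z :=
            hasFDerivAt_prodMk_right a z
          exact (hasFDerivAt_prodMk_left (a, z) w).comp z h1
        exact (hd.comp z hi).const_smul (f w)
    have hev : fderiv ℝ (fun z => ∫ w, f w • K ((a, z), w)) =ᶠ[nhds z]
        fun z => ∫ w, f w • K' ((a, z), w) := by
      filter_upwards [(hU.preimage hslice).mem_nhds (hTU haz)] with y hy
      exact (hder y hy).fderiv
    rw [← norm_iteratedFDeriv_fderiv, (hev.iteratedFDeriv ℝ k).eq_of_nhds]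
    exact hC f hf hf1 a z haz

lemma cov (g ρ : E3 → ℝ) (z : E3) (c : ℝ) (hc : 0 < c) :
    ∫ u, g (z - c • u) * ρ u = ∫ w, g w * ((c ^ 3)⁻¹ * ρ (c⁻¹ • (z - w))) := by
  have h1 : ∀ u, g (z - c • u) * ρ u =
      (fun v => g (z - v) * ρ (c⁻¹ • v)) (c • u) := by
    intro u; simp [smul_smul, hc.ne']
  rw [integral_congr_ae (Filter.Eventually.of_forall h1),
    Measure.integral_comp_smul volume (fun v => g (z - v) * ρ (c⁻¹ • v)) c,
    ← integral_sub_left_eq_self (fun v => g (z - v) * ρ (c⁻¹ • v)) volume z]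
  simp only [sub_sub_cancel, finrank_euclideanSpace, Fintype.card_fin]
  rw [abs_of_pos (by positivity), ← integral_smul]
  congr 1; ext w; simp; ring

def qf (p : E3 × E3) : ℝ := 1 + 2 * inner ℝ p.1 p.2 + ‖p.2‖ ^ 2

lemma qf_contDiff : ContDiff ℝ ((⊤ : ℕ∞) : WithTop ℕ∞) qf := by
  unfold qf
  have h1 : ContDiff ℝ ((⊤ : ℕ∞) : WithTop ℕ∞) (fun p : E3 × E3 => inner ℝ p.1 p.2) :=
    contDiff_fst.inner ℝ contDiff_snd
  have h2 : ContDiff ℝ ((⊤ : ℕ∞) : WithTop ℕ∞) (fun p : E3 × E3 => ‖p.2‖ ^ 2) :=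
    contDiff_snd.norm_sq ℝ
  exact (contDiff_const.add (contDiff_const.mul h1)).add h2

def UU : Set (E3 × E3) := {p | 0 < qf p ∧ qf p < 2 ∧ ‖p.2‖ < 1}

lemma UU_open : IsOpen UU := by
  have h := qf_contDiff.continuous
  exact (isOpen_lt continuous_const h).inter ((isOpen_lt h continuous_const).inter
    (isOpen_lt (continuous_norm.comp continuous_snd) continuous_const))

def KK (ε : ℝ) (ρ : E3 → ℝ) (q : (E3 × E3) × E3) : ℝ :=
  ((Real.sqrt (qf q.1) * ε) ^ 3)⁻¹ * ρ ((Real.sqrt (qf q.1) * ε)⁻¹ • (q.1.2 - q.2))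

lemma KK_contDiffOn (ε : ℝ) (hε : 0 < ε) (ρ : E3 → ℝ) (hρ : ContDiff ℝ (⊤ : ℕ∞) ρ) :
    ContDiffOn ℝ ((⊤ : ℕ∞) : WithTop ℕ∞) (KK ε ρ) (UU ×ˢ Set.univ) := by
  have h0 : ContDiffOn ℝ ((⊤ : ℕ∞) : WithTop ℕ∞)
      (fun q : (E3 × E3) × E3 => Real.sqrt (qf q.1) * ε) (UU ×ˢ Set.univ) :=
    ((qf_contDiff.comp contDiff_fst).contDiffOn.sqrt (fun q hq => hq.1.1.ne')).mul contDiffOn_const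
  have hne : ∀ q ∈ UU ×ˢ (Set.univ : Set E3), Real.sqrt (qf q.1) * ε ≠ 0 := fun q hq =>
    (mul_pos (Real.sqrt_pos.2 hq.1.1) hε).ne'
  refine ((h0.pow 3).inv (fun q hq => pow_ne_zero _ (hne q hq))).mul ?_
  refine hρ.comp_contDiffOn ((h0.inv hne).smul ?_)
  exact ((contDiff_snd.comp contDiff_fst).sub contDiff_snd).contDiffOn

lemma KK_supp (ε : ℝ) (hε : ε ∈ Set.Ioo (0 : ℝ) (1 / 2)) (ρ : E3 → ℝ)
    (hρsupp : Function.support ρ ⊆ Metric.ball (0 : E3) ε) :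
    ∀ p ∈ UU, ∀ w, w ∉ Metric.closedBall (0 : E3) 3 → KK ε ρ (p, w) = 0 := by
  intro p hp w hw
  have hc : 0 < Real.sqrt (qf p) * ε := mul_pos (Real.sqrt_pos.2 hp.1) hε.1
  have hs : Real.sqrt (qf p) ≤ 2 := by
    rw [Real.sqrt_le_left (by norm_num)]; linarith [hp.2.1]
  by_contra hne
  have h1 : ρ ((Real.sqrt (qf p) * ε)⁻¹ • (p.2 - w)) ≠ 0 := fun h => hne (by simp only [KK, h, mul_zero])
  have h2 := hρsupp h1
  rw [mem_ball_zero_iff, norm_smul, norm_inv, Real.norm_of_nonneg hc.le,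
    inv_mul_lt_iff₀ hc] at h2
  rw [mem_closedBall_zero_iff, not_le] at hw
  have h3 : ‖w‖ ≤ ‖p.2‖ + ‖p.2 - w‖ := by
    have := norm_sub_le p.2 (p.2 - w); simpa using this
  have h4 : Real.sqrt (qf p) * ε * ε ≤ 2 * 1 * 1 := by
    have := hε.1; have := hε.2; gcongr <;> linarith
  linarith [hp.2.2]

lemma jap_pos (x : E3) : 0 < jap x := Real.sqrt_pos.2 (by positivity)

lemma jap_sq (x : E3) : jap x ^ 2 = 1 + ‖x‖ ^ 2 := Real.sq_sqrt (by positivity)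

lemma jap_scale (x z : E3) :
    jap (x + jap x • z) = jap x * Real.sqrt (qf ((jap x)⁻¹ • x, z)) := by
  have hp := jap_pos x
  conv_rhs => rw [← Real.sqrt_sq hp.le, ← Real.sqrt_mul (by positivity)]
  rw [Real.sqrt_sq hp.le]
  unfold jap
  congr 1
  change 1 + ‖x + jap x • z‖ ^ 2 = jap x ^ 2 * qf ((jap x)⁻¹ • x, z)
  rw [norm_add_sq_real, norm_smul, inner_smul_right, Real.norm_of_nonneg hp.le]
  simp only [qf, real_inner_smul_left]
  have := jap_sq x
  field_simp
  linear_combination -this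

lemma scaled (S : Set E3) (ε : ℝ) (hε : 0 < ε) (ρ : E3 → ℝ) (x z : E3)
    (hz : ((jap x)⁻¹ • x, z) ∈ UU) :
    wCutoff S ε ρ (x + jap x • z) =
      ∫ w, Set.indicator S (fun _ => (1 : ℝ)) (x + jap x • w) •
        KK ε ρ (((jap x)⁻¹ • x, z), w) := by
  have hc := mul_pos (Real.sqrt_pos.2 hz.1) hε
  have := cov (fun w => Set.indicator S (fun _ => (1 : ℝ)) (x + jap x • w)) ρ z _ hc
  simp only [smul_eq_mul, KK]
  rw [← this]
  unfold wCutoff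
  congr 1; ext u
  rw [jap_scale]
  congr 2
  module

/-- each derivative of order `k` of the rescaled mollification
`χ̃(x) = ∫ 𝟙_S(x - ⟨x⟩ε u) ρ(u) du` decays like `⟨x⟩^{-k}`: there is a constant
`C(ε, k)` with `|D^k χ̃(x)| ≤ C(ε,k) ⟨x⟩^{-k}` for all `x`. -/
theorem stmt8 (S : Set E3) (hS : MeasurableSet S) (ε : ℝ)
    (hε : ε ∈ Set.Ioo (0 : ℝ) (1 / 2))
    (ρ : E3 → ℝ) (hρsmooth : ContDiff ℝ (⊤ : ℕ∞) ρ) (hρpos : ∀ u, 0 ≤ ρ u)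
    (hρsupp : Function.support ρ ⊆ Metric.ball (0 : E3) ε)
    (hρint : ∫ u : E3, ρ u = 1) (k : ℕ) :
    ∃ C : ℝ, ∀ x, ‖iteratedFDeriv ℝ k (wCutoff S ε ρ) x‖ ≤ C * (jap x)⁻¹ ^ k := by
  have hq1 : ∀ a : E3, qf (a, 0) = 1 := fun a => by simp [qf]
  obtain ⟨C, hC⟩ := key k UU UU_open 3 (KK ε ρ) (KK_contDiffOn ε hε.1 ρ hρsmooth)
    (KK_supp ε hε ρ hρsupp) (Metric.closedBall 0 1 ×ˢ {0})
    ((isCompact_closedBall _ _).prod isCompact_singleton)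
    (by
      rintro ⟨a, z⟩ ⟨-, hz⟩
      obtain rfl : z = 0 := hz
      refine ⟨?_, ?_, ?_⟩ <;> simp [hq1])
  refine ⟨C, fun x => ?_⟩
  have hr := jap_pos x
  set r := jap x with hrdef
  have ha : (r⁻¹ • x, (0 : E3)) ∈ (Metric.closedBall (0 : E3) 1 ×ˢ {0} : Set (E3 × E3)) := by
    refine ⟨?_, rfl⟩
    rw [mem_closedBall_zero_iff, norm_smul, norm_inv, Real.norm_of_nonneg hr.le,
      inv_mul_le_iff₀ hr, mul_one]
    have := jap_sq x
    exact le_of_abs_le (abs_le_of_sq_le_sq (by nlinarith) hr.le)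
  have hb := hC (fun w => Set.indicator S (fun _ => (1 : ℝ)) (x + r • w))
    ((measurable_const.indicator hS).comp (by fun_prop))
    (fun w => (norm_indicator_le_norm_self _ _).trans (by simp)) _ _ ha
  have hev : (fun z => wCutoff S ε ρ (x + r • z)) =ᶠ[nhds 0] fun z =>
      ∫ w, Set.indicator S (fun _ => (1 : ℝ)) (x + r • w) • KK ε ρ ((r⁻¹ • x, z), w) := by
    have hcont : Continuous fun z : E3 => (r⁻¹ • x, z) := by fun_prop
    have hmem : (r⁻¹ • x, (0 : E3)) ∈ UU := by
      refine ⟨?_, ?_, ?_⟩ <;> simp [hq1]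
    filter_upwards [(UU_open.preimage hcont).mem_nhds hmem] with z hz
    exact scaled S ε hε.1 ρ x z hz
  rw [← (hev.iteratedFDeriv ℝ k).eq_of_nhds] at hb
  set H : E3 → ℝ := fun z => wCutoff S ε ρ (x + r • z) with hH
  let e : E3 ≃L[ℝ] E3 := ContinuousLinearEquiv.smulLeft (Units.mk0 r⁻¹ (inv_ne_zero hr.ne'))
  have he : ∀ y, e y = r⁻¹ • y := fun y => rfl
  have hcomp : (fun y => wCutoff S ε ρ (x + y)) = H ∘ e := by
    ext y
    simp [hH, he, smul_smul, hr.ne']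
  have h1 : iteratedFDeriv ℝ k (wCutoff S ε ρ) x = iteratedFDeriv ℝ k (H ∘ e) 0 := by
    rw [← hcomp, iteratedFDeriv_comp_add_left, add_zero]
  have h2 : iteratedFDeriv ℝ k (H ∘ e) 0 =
      (iteratedFDeriv ℝ k H 0).compContinuousLinearMap fun _ => (e : E3 →L[ℝ] E3) := by
    have := e.iteratedFDerivWithin_comp_right H (s := Set.univ) uniqueDiffOn_univ
      (x := 0) (Set.mem_univ _) k
    simpa [iteratedFDerivWithin_univ] using this
  rw [h1, h2]
  refine (ContinuousMultilinearMap.norm_compContinuousLinearMap_le _ _).trans ?_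
  have hen : ‖(e : E3 →L[ℝ] E3)‖ ≤ r⁻¹ := by
    refine ContinuousLinearMap.opNorm_le_bound _ (by positivity) fun y => ?_
    change ‖r⁻¹ • y‖ ≤ _
    rw [norm_smul, norm_inv, Real.norm_of_nonneg hr.le]
  rw [Finset.prod_const, Finset.card_univ, Fintype.card_fin]
  gcongr
  exact (norm_nonneg _).trans hb
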